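/- Let R be a regular domain with a generalized regular system of parameters x = x_1,…,x_p, and let I ⊆ R be an ideal. Then for every n ∈ ℕ, Γ_x(I^n) = n·Γ_x(I) (the n-fold dilate of the Newton polyhedron of I). -/

import Mathlib

open Ideal Set Pointwise

noncomputable section

namespace NND

variable {R : Type*} [CommRing R] {p : ℕ}

/-- The monomial `x^a = x 0 ^ a 0 * ⋯` in the elements `x`. -/
def mono (x : Fin p → R) (a : Fin p → ℕ) : R := ∏ i, x i ^ a i

/-- A (commutative) ring is regular local if it is Noetherian local and its maximal ideal
can be generated by `dim R` elements. -/
def IsRegularLocal (A : Type*) [CommRing A] : Prop :=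
  IsNoetherianRing A ∧ ∃ h : IsLocalRing A, ∃ s : Finset A,
    Ideal.span (s : Set A) = @IsLocalRing.maximalIdeal A _ h ∧
    (s.card : WithBot (WithTop ℕ)) = ringKrullDim A

/-- A regular domain: an integral domain whose localization at every prime is regular local. -/
def IsRegularDomain (A : Type*) [CommRing A] : Prop :=
  IsDomain A ∧ ∀ (P : Ideal A) (hP : P.IsPrime), IsRegularLocal (@Localization.AtPrime A _ P hP)

/-- `x` is a regular sequence. -/
def IsRegSeq (x : Fin p → R) : Prop :=
  Ideal.span (Set.range x) ≠ ⊤ ∧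
  ∀ i : Fin p, ∀ r : R, r * x i ∈ Ideal.span (x '' {j | j < i}) →
    r ∈ Ideal.span (x '' {j | j < i})

/-- A generalized regular system of parameters: a permutable regular sequence all of whose
subquotients are regular domains. -/
def IsGRSOP (x : Fin p → R) : Prop :=
  (∀ σ : Equiv.Perm (Fin p), IsRegSeq (x ∘ σ)) ∧
  ∀ S : Set (Fin p), IsRegularDomain (R ⧸ Ideal.span (x '' S))

/-- `A` is the exponent set of a monomial representation of `f`:
`h * f = ∑_{a ∈ A} r a * x^a` with `h` and the `r a` outside `(x_1, …, x_p)`. -/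
def IsMonRep (x : Fin p → R) (f : R) (A : Finset (Fin p → ℕ)) : Prop :=
  ∃ (h : R) (r : (Fin p → ℕ) → R),
    h ∉ Ideal.span (Set.range x) ∧ (∀ a ∈ A, r a ∉ Ideal.span (Set.range x)) ∧
    h * f = ∑ a ∈ A, r a * mono x a

/-- A minimal (irredundant) monomial representation: no monomial divides another. -/
def IsMinMonRep (x : Fin p → R) (f : R) (A : Finset (Fin p → ℕ)) : Prop :=
  IsMonRep x f A ∧ ∀ a ∈ A, ∀ b ∈ A, a ≠ b → ¬ mono x a ∣ mono x b

open Classical in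
/-- The support of `f`: the exponent set of its (unique) minimal monomial representation. -/
def supp (x : Fin p → R) (f : R) : Set (Fin p → ℕ) :=
  if h : ∃ A : Finset (Fin p → ℕ), IsMinMonRep x f A then ↑h.choose else ∅

/-- Embedding of exponent vectors into `ℝ^p`. -/
def toR (a : Fin p → ℕ) : Fin p → ℝ := fun i => (a i : ℝ)

/-- The Newton polyhedron of a set of ring elements. -/
def Γ (x : Fin p → R) (S : Set R) : Set (Fin p → ℝ) :=
  convexHull ℝ (toR '' ⋃ f ∈ S, supp x f)

/-- The Newton polyhedron `Γ_x(I)` of an ideal. -/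
def ΓI (x : Fin p → R) (I : Ideal R) : Set (Fin p → ℝ) := Γ x (I : Set R)

/-- The Newton polyhedron `Γ_x(f)` of an element: that of the principal ideal `(f)`. -/
def ΓE (x : Fin p → R) (f : R) : Set (Fin p → ℝ) := ΓI x (Ideal.span {f})

/-- The integral closure of an ideal `I`: elements satisfying an equation of integral
dependence `f^n + a_1 f^{n-1} + ⋯ + a_n = 0` with `a_i ∈ I^i`. -/
def intClosure (I : Ideal R) : Set R :=
  {f | ∃ n : ℕ, 0 < n ∧ ∃ a : ℕ → R, (∀ i ∈ Finset.Icc 1 n, a i ∈ I ^ i) ∧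
    f ^ n + ∑ i ∈ Finset.Icc 1 n, a i * f ^ (n - i) = 0}

/-- The monomial ideal `I_0` spanned by the lattice points of `Γ_x(I)`. -/
def idealZero (x : Fin p → R) (I : Ideal R) : Ideal R :=
  Ideal.span (mono x '' {a | toR a ∈ ΓI x I})

/-- The ideal `K_I` generated by the monomials lying in the integral closure of `I`. -/
def KIdeal (x : Fin p → R) (I : Ideal R) : Ideal R :=
  Ideal.span {m | (∃ a : Fin p → ℕ, m = mono x a) ∧ m ∈ intClosure I}

lemma mem_sup_singleton (Y : Ideal R) (v r : R) :
    r ∈ Y ⊔ Ideal.span {v} ↔ ∃ s, r - s * v ∈ Y := by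
  rw [Submodule.mem_sup]
  constructor
  · rintro ⟨y, hy, z, hz, rfl⟩
    obtain ⟨s, rfl⟩ := Ideal.mem_span_singleton'.1 hz
    exact ⟨s, by simpa using hy⟩
  · rintro ⟨s, hs⟩
    exact ⟨_, hs, s * v, Ideal.mem_span_singleton'.2 ⟨s, rfl⟩, by ring⟩

lemma reg_pow_self (Y : Ideal R) (v : R) (hv : ∀ r, r * v ∈ Y → r ∈ Y) (m : ℕ) :
    ∀ r, r * v ^ m ∈ Y → r ∈ Y := by
  induction m with
  | zero => intro r h; simpa using h
  | succ m ih =>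
    intro r h
    apply ih
    apply hv
    rw [pow_succ, ← mul_assoc] at h
    exact h

lemma reg_pow (Y : Ideal R) (u v : R) (hv : ∀ r, r * v ∈ Y → r ∈ Y)
    (huv : ∀ r, r * u ∈ Y ⊔ Ideal.span {v} → r ∈ Y ⊔ Ideal.span {v}) (m : ℕ) :
    ∀ r, r * u ∈ Y ⊔ Ideal.span {v ^ m} → r ∈ Y ⊔ Ideal.span {v ^ m} := by
  induction m with
  | zero => intro r h; simp
  | succ m ih =>
    intro r h
    obtain ⟨t, ht⟩ := (mem_sup_singleton _ _ _).1 h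
    have h1 : r * u ∈ Y ⊔ Ideal.span {v ^ m} :=
      (mem_sup_singleton _ _ _).2 ⟨t * v, by
        have : r * u - t * v * v ^ m = r * u - t * v ^ (m+1) := by ring
        rw [this]; exact ht⟩
    obtain ⟨s, hs⟩ := (mem_sup_singleton _ _ _).1 (ih r h1)
    have h2 : (s * u - t * v) * v ^ m ∈ Y := by
      have : (s * u - t * v) * v ^ m = (r * u - t * v ^ (m+1)) - u * (r - s * v ^ m) := by ring
      rw [this]
      exact Y.sub_mem ht (Y.mul_mem_left _ hs)
    have h3 := reg_pow_self Y v hv m _ h2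
    obtain ⟨w, hw⟩ := (mem_sup_singleton _ _ _).1 (huv s ((mem_sup_singleton _ _ _).2 ⟨t, h3⟩))
    refine (mem_sup_singleton _ _ _).2 ⟨w, ?_⟩
    have : r - w * v ^ (m+1) = (r - s * v ^ m) + v ^ m * (s - w * v) := by ring
    rw [this]
    exact Y.add_mem hs (Y.mul_mem_left _ hw)

lemma reg_base {x : Fin p → R} (hx : IsGRSOP x) (S : Finset (Fin p)) (i : Fin p) (hi : i ∉ S) :
    ∀ r, r * x i ∈ Ideal.span (x '' S) → r ∈ Ideal.span (x '' S) := by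
  classical
  let key : Fin p → ℕ := fun j => if j ∈ S then 0 else if j = i then 1 else 2
  let σ := Tuple.sort key
  have hm : Monotone (key ∘ σ) := Tuple.monotone_sort key
  have h := (hx.1 σ).2 (σ.symm i)
  have hs : (x ∘ σ) '' {j | j < σ.symm i} = x '' S := by
    rw [Set.image_comp]
    congr 1
    ext j
    simp only [Set.mem_image, Set.mem_ofPred_eq, Finset.mem_coe]
    have ki : key i = 1 := by simp [key, hi]
    constructor
    · rintro ⟨k, hk, rfl⟩
      have h1 : key (σ k) ≤ key (σ (σ.symm i)) := hm hk.le
      rw [Equiv.apply_symm_apply, ki] at h1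
      by_contra hS
      have hne : σ k ≠ i := by
        intro e; rw [← e] at hk; simp at hk
      simp [key, hS, hne] at h1
    · intro hj
      refine ⟨σ.symm j, ?_, by simp⟩
      by_contra hlt
      have h1 : key (σ (σ.symm i)) ≤ key (σ (σ.symm j)) := hm (not_lt.1 hlt)
      simp only [Equiv.apply_symm_apply, ki] at h1
      simp [key, hj] at h1
  rw [hs] at h
  simpa using h

/-- mixed ideals -/
def pw (x : Fin p → R) (m : Fin p → ℕ) (T S : Finset (Fin p)) : Ideal R :=
  Ideal.span ((fun j => x j ^ m j) '' T) ⊔ Ideal.span (x '' S)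

lemma pw_insert_left (x : Fin p → R) (m : Fin p → ℕ) (T S : Finset (Fin p)) (i : Fin p) :
    pw x m (insert i T) S = pw x m T S ⊔ Ideal.span {x i ^ m i} := by
  classical
  unfold pw
  rw [Finset.coe_insert, Set.image_insert_eq, Ideal.span_insert, sup_comm (Ideal.span {_}), sup_right_comm]

lemma pw_insert_right (x : Fin p → R) (m : Fin p → ℕ) (T S : Finset (Fin p)) (i : Fin p) :
    pw x m T (insert i S) = pw x m T S ⊔ Ideal.span {x i} := by
  classical
  unfold pw
  rw [Finset.coe_insert, Set.image_insert_eq, Ideal.span_insert, sup_comm (Ideal.span {_}), sup_assoc]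

lemma reg_pw {x : Fin p → R} (hx : IsGRSOP x) (m : Fin p → ℕ) (T : Finset (Fin p)) :
    ∀ (S : Finset (Fin p)), Disjoint T S → ∀ i, i ∉ T → i ∉ S →
      ∀ r, r * x i ∈ pw x m T S → r ∈ pw x m T S := by
  classical
  induction T using Finset.induction_on with
  | empty =>
    intro S _ i _ hi r h
    have := reg_base hx S i hi r
    simpa [pw] using this (by simpa [pw] using h)
  | insert j T hj ih =>
    intro S hd i hiT hiS
    rw [Finset.disjoint_insert_left] at hd
    rw [Finset.mem_insert, not_or] at hiT
    rw [pw_insert_left]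
    apply reg_pow
    · exact ih S hd.2 j hj hd.1
    · rw [← pw_insert_right]
      apply ih _ _ _ hiT.2
      · simp [hiT.1, hiS]
      · simp [hd.2, hj]

lemma key_aux {x : Fin p → R} (hx : IsGRSOP x) (a : Fin p → ℕ) (T : Finset (Fin p)) :
    ∀ (S : Finset (Fin p)), Disjoint T S → ∀ r,
      r * ∏ i ∈ T, x i ^ a i ∈ pw x (fun i => a i + 1) T S → r ∈ Ideal.span (Set.range x) := by
  classical
  induction T using Finset.induction_on with
  | empty =>
    intro S _ r h
    have : r ∈ Ideal.span (x '' S) := by simpa [pw] using h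
    exact Ideal.span_mono (Set.image_subset_range _ _) this
  | insert j T hj ih =>
    intro S hd r h
    rw [Finset.disjoint_insert_left] at hd
    rw [pw_insert_left, Finset.prod_insert hj] at h
    obtain ⟨s, hs⟩ := (mem_sup_singleton _ _ _).1 h
    have h1 : ((r * ∏ i ∈ T, x i ^ a i) - s * x j) * x j ^ a j ∈ pw x (fun i => a i + 1) T S := by
      convert hs using 1; ring
    have h2 := reg_pow_self _ _ (reg_pw hx _ T S hd.2 j hj hd.1) _ _ h1
    apply ih (insert j S)
    · simp [hd.2, hj]
    · rw [pw_insert_right]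
      exact (mem_sup_singleton _ _ _).2 ⟨s, h2⟩

lemma key {x : Fin p → R} (hx : IsGRSOP x) (r : R) (a : Fin p → ℕ) (A : Set (Fin p → ℕ))
    (h : r * mono x a ∈ Ideal.span (mono x '' A)) (hA : ∀ b ∈ A, ¬ b ≤ a) :
    r ∈ Ideal.span (Set.range x) := by
  classical
  apply key_aux hx a Finset.univ ∅ (by simp) r
  refine (Ideal.span_le.2 ?_) h
  rintro _ ⟨b, hb, rfl⟩
  have := hA b hb
  rw [Pi.le_def] at this
  push Not at this
  obtain ⟨i, hi⟩ := this
  have h1 : x i ^ (a i + 1) ∣ mono x b :=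
    (pow_dvd_pow _ hi).trans (Finset.dvd_prod_of_mem (fun i => x i ^ b i) (Finset.mem_univ i))
  refine Ideal.mem_of_dvd _ h1 ?_
  exact Ideal.mem_sup_left (Ideal.subset_span ⟨i, by simp, rfl⟩)

lemma P_prime {x : Fin p → R} (hx : IsGRSOP x) : (Ideal.span (Set.range x)).IsPrime := by
  have := (hx.2 Set.univ).1
  rw [Set.image_univ] at this
  exact (Ideal.Quotient.isDomain_iff_prime _).1 this

lemma mono_add (x : Fin p → R) (a b : Fin p → ℕ) : mono x (a + b) = mono x a * mono x b := by
  simp [mono, pow_add, Finset.prod_mul_distrib]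

lemma mono_dvd_of_le (x : Fin p → R) {a b : Fin p → ℕ} (h : a ≤ b) : mono x a ∣ mono x b := by
  obtain ⟨c, rfl⟩ := exists_add_of_le h
  rw [mono_add]
  exact dvd_mul_right _ _

lemma mono_dvd_iff {x : Fin p → R} (hx : IsGRSOP x) {a b : Fin p → ℕ} :
    mono x a ∣ mono x b ↔ a ≤ b := by
  refine ⟨fun h => ?_, mono_dvd_of_le x⟩
  by_contra hab
  have := key hx 1 b {a} (by
    rw [one_mul, Set.image_singleton]
    exact Ideal.mem_span_singleton.2 h) (by simpa using hab)
  exact (P_prime hx).ne_top ((Ideal.eq_top_iff_one _).2 this)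

lemma krull (hR : IsRegularDomain R) (P J : Ideal R) [hP : P.IsPrime] (f : R)
    (h : ∀ N : ℕ, f ∈ J ⊔ P ^ N) : ∃ g, g ∉ P ∧ g * f ∈ J := by
  let L := Localization.AtPrime P
  have : IsNoetherianRing L := (hR.2 P hP).1
  let J' := J.map (algebraMap R L)
  have h1 : algebraMap R L f ∈ J' := by
    have hb := Ideal.iInf_pow_smul_eq_bot_of_isLocalRing (M := L ⧸ J')
      (IsLocalRing.maximalIdeal L) (Ideal.IsPrime.ne_top')
    rw [← Ideal.Quotient.eq_zero_iff_mem, ← Submodule.mem_bot L, ← hb, Submodule.mem_iInf]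
    intro N
    obtain ⟨y, hy, z, hz, e⟩ := Submodule.mem_sup.1 (h N)
    have h2 : algebraMap R L z ∈ IsLocalRing.maximalIdeal L ^ N := by
      rw [← Localization.AtPrime.map_eq_maximalIdeal, ← Ideal.map_pow]
      exact Ideal.mem_map_of_mem _ hz
    have h3 : Ideal.Quotient.mk J' (algebraMap R L f) = (algebraMap R L z) • (1 : L ⧸ J') := by
      rw [← e, map_add, map_add, Ideal.Quotient.eq_zero_iff_mem.2 (Ideal.mem_map_of_mem _ hy), zero_add]
      change _ = Ideal.Quotient.mk J' (algebraMap R L z * 1)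
      rw [mul_one]
    rw [h3]
    exact Submodule.smul_mem_smul h2 trivial
  obtain ⟨g, hg, hgf⟩ := (IsLocalization.algebraMap_mem_map_algebraMap_iff P.primeCompl L _ _).1 h1
  exact ⟨g, hg, hgf⟩

lemma mem_span_mono {x : Fin p → R} {A : Set (Fin p → ℕ)} {g : R}
    (h : g ∈ Ideal.span (mono x '' A)) :
    ∃ (F : Finset (Fin p → ℕ)) (c : (Fin p → ℕ) → R), (∀ a ∈ F, a ∈ A) ∧
      g = ∑ a ∈ F, c a * mono x a := by
  obtain ⟨l, hl, e⟩ := (Finsupp.mem_span_image_iff_linearCombination R).1 h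
  refine ⟨l.support, l, fun a ha => hl ha, ?_⟩
  rw [← e, Finsupp.linearCombination_apply, Finsupp.sum]
  rfl

lemma sum_mem_span (x : Fin p → R) (A : Finset (Fin p → ℕ)) (B : Set (Fin p → ℕ))
    (c : (Fin p → ℕ) → R) (h : ∀ a ∈ A, a ∈ B) :
    ∑ a ∈ A, c a * mono x a ∈ Ideal.span (mono x '' B) :=
  Ideal.sum_mem _ fun a ha => Ideal.mul_mem_left _ _ (Ideal.subset_span ⟨a, h a ha, rfl⟩)

lemma P_mul_mono (x : Fin p → R) (a : Fin p → ℕ) (r : R) (hr : r ∈ Ideal.span (Set.range x)) :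
    r * mono x a ∈ Ideal.span (mono x '' {b | ∑ i, b i = ∑ i, a i + 1}) := by
  classical
  induction hr using Submodule.span_induction with
  | mem y hy =>
    obtain ⟨i, rfl⟩ := hy
    refine Ideal.subset_span ⟨Pi.single i 1 + a, ?_, ?_⟩
    · simp [Finset.sum_add_distrib, add_comm]
    · rw [mono_add]
      congr 1
      simp [mono, Pi.single_apply, Finset.prod_ite_eq', pow_ite]
  | zero => simp
  | add y z _ _ h1 h2 => rw [add_mul]; exact Ideal.add_mem _ h1 h2
  | smul s y _ h => rw [smul_eq_mul, mul_assoc]; exact Ideal.mul_mem_left _ _ h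

lemma expand (x : Fin p → R) (f : R) (N : ℕ) :
    ∃ (F : Finset (Fin p → ℕ)) (c : (Fin p → ℕ) → R),
      (∀ a ∈ F, ∑ i, a i < N ∧ c a ∉ Ideal.span (Set.range x)) ∧
      f - ∑ a ∈ F, c a * mono x a ∈ Ideal.span (mono x '' {b | ∑ i, b i = N}) := by
  classical
  induction N with
  | zero =>
    refine ⟨∅, 0, by simp, ?_⟩
    have : (1 : R) ∈ Ideal.span (mono x '' {b | ∑ i, b i = 0}) :=
      Ideal.subset_span ⟨0, by simp, by simp [mono]⟩
    rw [(Ideal.eq_top_iff_one _).2 this]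
    trivial
  | succ N ih =>
    obtain ⟨F, c, hF, hf⟩ := ih
    obtain ⟨G, d, hG, hg⟩ := mem_span_mono hf
    let G' := G.filter (fun a => d a ∉ Ideal.span (Set.range x))
    have hG' : ∀ a ∈ G', ∑ i, a i = N := fun a ha => hG a (Finset.mem_filter.1 ha).1
    have hdis : Disjoint F G' := by
      rw [Finset.disjoint_left]
      intro a ha ha'
      have := (hF a ha).1
      have := hG' a ha'
      omega
    refine ⟨F ∪ G', fun a => if a ∈ F then c a else d a, ?_, ?_⟩
    · intro a ha
      by_cases h : a ∈ F
      · simp only [h, if_true]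
        exact ⟨(hF a h).1.trans (Nat.lt_succ_self _), (hF a h).2⟩
      · simp only [h, if_false]
        have h' : a ∈ G' := (Finset.mem_union.1 ha).resolve_left h
        exact ⟨by rw [hG' a h']; exact Nat.lt_succ_self _, (Finset.mem_filter.1 h').2⟩
    · rw [Finset.sum_union hdis]
      have e1 : ∑ a ∈ F, (if a ∈ F then c a else d a) * mono x a = ∑ a ∈ F, c a * mono x a :=
        Finset.sum_congr rfl fun a ha => by simp [ha]
      have e2 : ∑ a ∈ G', (if a ∈ F then c a else d a) * mono x a = ∑ a ∈ G', d a * mono x a :=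
        Finset.sum_congr rfl fun a ha => by simp [Finset.disjoint_right.1 hdis ha]
      rw [e1, e2, ← sub_sub, hg]
      rw [← Finset.sum_filter_add_sum_filter_not G (fun a => d a ∉ Ideal.span (Set.range x)),
        add_sub_cancel_left]
      refine Ideal.sum_mem _ fun a ha => ?_
      rw [Finset.mem_filter, not_not] at ha
      have := P_mul_mono x a _ ha.2
      have hN : ∑ i, a i = N := hG a ha.1
      rwa [hN] at this

lemma mono_mem_pow (x : Fin p → R) (a : Fin p → ℕ) :
    mono x a ∈ Ideal.span (Set.range x) ^ (∑ i, a i) := by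
  rw [← Finset.prod_pow_eq_pow_sum]
  exact Ideal.prod_mem_prod fun i _ => Ideal.pow_mem_pow (Ideal.subset_span (Set.mem_range_self i)) _

lemma exists_min (hR : IsRegularDomain R) {x : Fin p → R} (hx : IsGRSOP x) (f : R) :
    ∃ A : Finset (Fin p → ℕ), IsMinMonRep x f A := by
  classical
  have hP := P_prime hx
  choose F c hF hf using expand x f
  let G : Set (Fin p → ℕ) := ⋃ N, (F N : Set (Fin p → ℕ))
  let A₀ : Set (Fin p → ℕ) := {a | Minimal (· ∈ G) a}
  have hanti : IsAntichain (· ≤ ·) A₀ := by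
    intro a ha b hb hab hle
    exact hab (le_antisymm hle (hb.2 ha.1 hle))
  have hfin : A₀.Finite := WellQuasiOrderedLE.finite_of_isAntichain hanti
  have hle : Ideal.span (mono x '' G) ≤ Ideal.span (mono x '' A₀) := by
    rw [Ideal.span_le]
    rintro _ ⟨b, hb, rfl⟩
    obtain ⟨a, hab, ha⟩ := exists_minimal_le_of_wellFoundedLT (· ∈ G) b hb
    exact Ideal.mem_of_dvd _ (mono_dvd_of_le x hab) (Ideal.subset_span ⟨a, ha, rfl⟩)
  have hFG : ∀ N, ∀ a ∈ F N, a ∈ G := fun N a ha => Set.mem_iUnion.2 ⟨N, ha⟩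
  obtain ⟨h, hh, hhf⟩ := krull hR (Ideal.span (Set.range x)) (Ideal.span (mono x '' A₀)) f (by
    intro N
    have e : f = (∑ a ∈ F N, c N a * mono x a) + (f - ∑ a ∈ F N, c N a * mono x a) := by ring
    rw [e]
    refine Submodule.add_mem_sup (hle (sum_mem_span x _ _ _ (hFG N))) ?_
    refine Ideal.span_le.2 ?_ (hf N)
    rintro _ ⟨a, ha, rfl⟩
    have ha' : ∑ i, a i = N := ha
    rw [← ha']
    exact mono_mem_pow x a)
  obtain ⟨B, d, hB, hd⟩ := mem_span_mono hhf
  -- extend coefficients by zero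
  let A := hfin.toFinset
  let r : (Fin p → ℕ) → R := fun a => if a ∈ B then d a else 0
  have hBA : B ⊆ A := fun a ha => hfin.mem_toFinset.2 (hB a ha)
  have hr : h * f = ∑ a ∈ A, r a * mono x a := by
    rw [hd, ← Finset.sum_subset hBA]
    · exact Finset.sum_congr rfl fun a ha => by simp [r, ha]
    · intro a _ ha; simp [r, ha]
  refine ⟨A, ⟨h, r, hh, ?_, hr⟩, ?_⟩
  · intro a ha hra
    have ha0 : a ∈ A₀ := hfin.mem_toFinset.1 ha
    obtain ⟨N, haN⟩ := Set.mem_iUnion.1 ha0.1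
    have haN' : a ∈ F N := haN
    have hk : h * c N a - r a ∈ Ideal.span (Set.range x) := by
      refine key hx _ a ((G \ {a}) ∩ {b | ¬ b ≤ a} ∪ {b | ∑ i, b i = N}) ?_ ?_
      · have e : (h * c N a - r a) * mono x a =
            (∑ b ∈ A.erase a, r b * mono x b) - h * (∑ b ∈ (F N).erase a, c N b * mono x b)
              - h * (f - ∑ b ∈ F N, c N b * mono x b) := by
          have e1 := Finset.add_sum_erase A (fun b => r b * mono x b) ha
          have e2 := Finset.add_sum_erase (F N) (fun b => c N b * mono x b) haN'
          rw [← e2]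
          have e3 := hr
          rw [← e1] at e3
          linear_combination e3
        rw [e]
        have hG' : ∀ b ∈ G, b ≠ a → b ∈ (G \ {a}) ∩ {b | ¬ b ≤ a} ∪ {b | ∑ i, b i = N} := by
          intro b hb hba
          refine Or.inl ⟨⟨hb, hba⟩, fun hle => hba (le_antisymm hle (ha0.2 hb hle))⟩
        refine Ideal.sub_mem _ (Ideal.sub_mem _ ?_ (Ideal.mul_mem_left _ _ ?_)) (Ideal.mul_mem_left _ _ ?_)
        · refine sum_mem_span x _ _ _ fun b hb => ?_
          rw [Finset.mem_erase] at hb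
          exact hG' b (hfin.mem_toFinset.1 hb.2).1 hb.1
        · refine sum_mem_span x _ _ _ fun b hb => ?_
          rw [Finset.mem_erase] at hb
          exact hG' b (hFG N b hb.2) hb.1
        · exact Ideal.span_mono (Set.image_mono Set.subset_union_right) (hf N)
      · rintro b (hb | hb) hle
        · exact hb.2 hle
        · have h1 := (hF N a haN').1
          have h2 : ∑ i, b i = N := hb
          have h3 : ∑ i, b i ≤ ∑ i, a i := Finset.sum_le_sum fun i _ => hle i
          omega
    have : h * c N a ∈ Ideal.span (Set.range x) := by
      have := Ideal.add_mem _ hk hra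
      simpa using this
    rcases hP.mem_or_mem this with h1 | h1
    · exact hh h1
    · exact (hF N a haN').2 h1
  · intro a ha b hb hab hdvd
    exact hanti (hfin.mem_toFinset.1 ha) (hfin.mem_toFinset.1 hb) hab ((mono_dvd_iff hx).1 hdvd)

lemma exists_le_of_mem {x : Fin p → R} (hx : IsGRSOP x) {f : R} {A : Finset (Fin p → ℕ)}
    (hA : IsMinMonRep x f A) {a : Fin p → ℕ} (ha : a ∈ A) {h : R}
    (hh : h ∉ Ideal.span (Set.range x)) (B : Set (Fin p → ℕ))
    (hf : h * f ∈ Ideal.span (mono x '' B)) : ∃ b ∈ B, b ≤ a := by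
  classical
  by_contra hcon
  push Not at hcon
  obtain ⟨⟨g, r, hg, hr, e⟩, hmin⟩ := hA
  have hP := P_prime hx
  have hk : h * r a ∈ Ideal.span (Set.range x) := by
    refine key hx _ a (B ∪ (A.erase a : Finset _)) ?_ ?_
    · have e' : h * r a * mono x a = g * (h * f) - h * ∑ b ∈ A.erase a, r b * mono x b := by
        have e1 := Finset.add_sum_erase A (fun b => r b * mono x b) ha
        rw [← e1] at e
        linear_combination (-h) * e
      rw [e']
      refine Ideal.sub_mem _ (Ideal.mul_mem_left _ _ ?_) (Ideal.mul_mem_left _ _ ?_)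
      · exact Ideal.span_mono (Set.image_mono Set.subset_union_left) hf
      · exact sum_mem_span x _ _ _ fun b hb => Or.inr hb
    · rintro b (hb | hb) hle
      · exact hcon b hb hle
      · have hb' := Finset.mem_erase.1 (Finset.mem_coe.1 hb)
        exact hmin b hb'.2 a ha hb'.1 (mono_dvd_of_le x hle)
  rcases hP.mem_or_mem hk with h1 | h1
  · exact hh h1
  · exact hr a ha h1

lemma minRep_subset {x : Fin p → R} (hx : IsGRSOP x) {f : R} {A B : Finset (Fin p → ℕ)}
    (hA : IsMinMonRep x f A) (hB : IsMinMonRep x f B) : A ⊆ B := by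
  intro a ha
  have hmem : ∀ {C : Finset (Fin p → ℕ)}, IsMinMonRep x f C → ∃ h, h ∉ Ideal.span (Set.range x) ∧
      h * f ∈ Ideal.span (mono x '' C) := by
    rintro C ⟨⟨h, r, hh, _, e⟩, _⟩
    exact ⟨h, hh, e ▸ sum_mem_span x _ _ _ fun b hb => hb⟩
  obtain ⟨h, hh, hf⟩ := hmem hB
  obtain ⟨b, hb, hba⟩ := exists_le_of_mem hx hA ha hh _ hf
  obtain ⟨h', hh', hf'⟩ := hmem hA
  obtain ⟨a', ha', hab⟩ := exists_le_of_mem hx hB hb hh' _ hf'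
  have : a' = a := by
    by_contra hne
    exact hA.2 a' ha' a ha hne (mono_dvd_of_le x (hab.trans hba))
  subst this
  rw [le_antisymm hab hba]
  exact hb

lemma supp_eq {x : Fin p → R} (hx : IsGRSOP x) {f : R} {A : Finset (Fin p → ℕ)}
    (hA : IsMinMonRep x f A) : supp x f = A := by
  have hex : ∃ A : Finset (Fin p → ℕ), IsMinMonRep x f A := ⟨A, hA⟩
  unfold supp
  rw [dif_pos hex]
  have := hex.choose_spec
  exact congrArg _ (Finset.Subset.antisymm (minRep_subset hx this hA) (minRep_subset hx hA this))

/-- Union of supports. -/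
def SI (x : Fin p → R) (I : Ideal R) : Set (Fin p → ℕ) := ⋃ f ∈ (I : Set R), supp x f

lemma mem_SI {x : Fin p → R} {I : Ideal R} {a : Fin p → ℕ} :
    a ∈ SI x I ↔ ∃ f ∈ I, a ∈ supp x f := by
  simp [SI]

lemma SI_up (hR : IsRegularDomain R) {x : Fin p → R} (hx : IsGRSOP x) {I : Ideal R}
    {a b : Fin p → ℕ} (ha : a ∈ SI x I) (hab : a ≤ b) : b ∈ SI x I := by
  classical
  obtain ⟨f, hf, haf⟩ := mem_SI.1 ha
  obtain ⟨A, hA⟩ := exists_min hR hx f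
  rw [supp_eq hx hA] at haf
  obtain ⟨c, rfl⟩ := exists_add_of_le hab
  refine mem_SI.2 ⟨mono x c * f, I.mul_mem_left _ hf, ?_⟩
  have : IsMinMonRep x (mono x c * f) (A.image (· + c)) := by
    obtain ⟨⟨h, r, hh, hr, e⟩, hmin⟩ := hA
    refine ⟨⟨h, fun b => r (b - c), hh, ?_, ?_⟩, ?_⟩
    · intro b hb
      obtain ⟨a', ha', rfl⟩ := Finset.mem_image.1 hb
      simpa using hr a' ha'
    · rw [Finset.sum_image (by intro a _ b _ h; exact add_right_cancel h)]
      have : h * (mono x c * f) = mono x c * (h * f) := by ring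
      rw [this, e, Finset.mul_sum]
      refine Finset.sum_congr rfl fun b _ => ?_
      simp only [add_tsub_cancel_right, mono_add]
      ring
    · intro b hb b' hb' hne
      obtain ⟨a₁, h₁, rfl⟩ := Finset.mem_image.1 hb
      obtain ⟨a₂, h₂, rfl⟩ := Finset.mem_image.1 hb'
      rw [mono_dvd_iff hx]
      intro hle
      have hle' : a₁ ≤ a₂ := le_of_add_le_add_right hle
      exact hmin a₁ h₁ a₂ h₂ (by rintro rfl; exact hne rfl) (mono_dvd_of_le x hle')
  rw [supp_eq hx this]
  simpa using haf

lemma SI_mul_subset (hR : IsRegularDomain R) {x : Fin p → R} (hx : IsGRSOP x) (I J : Ideal R) :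
    SI x (I * J) ⊆ SI x I + SI x J := by
  intro a ha
  have hP := P_prime hx
  have hex : ∀ (K : Ideal R), ∀ f ∈ K, ∃ h, h ∉ Ideal.span (Set.range x) ∧
      h * f ∈ Ideal.span (mono x '' SI x K) := by
    intro K f hf
    obtain ⟨A, hA⟩ := exists_min hR hx f
    have hs := supp_eq hx hA
    obtain ⟨⟨h, r, hh, hr, e⟩, hmin⟩ := hA
    refine ⟨h, hh, e ▸ sum_mem_span x _ _ _ fun b hb => ?_⟩
    exact mem_SI.2 ⟨f, hf, by rw [hs]; exact hb⟩
  have hex2 : ∀ f ∈ I * J, ∃ h, h ∉ Ideal.span (Set.range x) ∧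
      h * f ∈ Ideal.span (mono x '' (SI x I + SI x J)) := by
    intro f hf
    induction hf using Submodule.mul_induction_on' with
    | mem_mul_mem m hm n hn =>
      obtain ⟨h, hh, h1⟩ := hex I m hm
      obtain ⟨h', hh', h2⟩ := hex J n hn
      refine ⟨h * h', fun hc => (hP.mem_or_mem hc).elim hh hh', ?_⟩
      have e : h * h' * (m * n) = (h * m) * (h' * n) := by ring
      rw [e]
      have := Ideal.mul_mem_mul h1 h2
      rw [Ideal.span_mul_span'] at this
      refine Ideal.span_mono ?_ this
      rintro _ ⟨_, ⟨a, ha, rfl⟩, _, ⟨b, hb, rfl⟩, rfl⟩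
      exact ⟨a + b, Set.add_mem_add ha hb, mono_add x a b⟩
    | add y _ z _ h1 h2 =>
      obtain ⟨h, hh, h1⟩ := h1
      obtain ⟨h', hh', h2⟩ := h2
      refine ⟨h * h', fun hc => (hP.mem_or_mem hc).elim hh hh', ?_⟩
      have e : h * h' * (y + z) = h' * (h * y) + h * (h' * z) := by ring
      rw [e]
      exact Ideal.add_mem _ (Ideal.mul_mem_left _ _ h1) (Ideal.mul_mem_left _ _ h2)
  obtain ⟨f, hf, haf⟩ := mem_SI.1 ha
  obtain ⟨A, hA⟩ := exists_min hR hx f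
  rw [supp_eq hx hA] at haf
  obtain ⟨h, hh, h1⟩ := hex2 f hf
  obtain ⟨b, hb, hba⟩ := exists_le_of_mem hx hA haf hh _ h1
  obtain ⟨u, hu, v, hv, rfl⟩ := hb
  obtain ⟨c, rfl⟩ := exists_add_of_le hba
  refine ⟨u, hu, v + c, SI_up hR hx hv le_self_add, ?_⟩
  simp [add_assoc]

lemma face (hR : IsRegularDomain R) {x : Fin p → R} (hx : IsGRSOP x) (f g : R)
    {A B C : Finset (Fin p → ℕ)} (hA : IsMinMonRep x f A) (hB : IsMinMonRep x g B)
    (hC : IsMinMonRep x (f * g) C) {a b : Fin p → ℕ} (ha : a ∈ A) (hb : b ∈ B)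
    (w : Fin p → ℝ) (hw : ∀ i, 0 ≤ w i) :
    ∃ c ∈ C, ∑ i, (c i : ℝ) * w i ≤ ∑ i, ((a + b) i : ℝ) * w i := by
  classical
  have hP := P_prime hx
  let wt : (Fin p → ℕ) → ℝ := fun a => ∑ i, (a i : ℝ) * w i
  have wt_add : ∀ a b, wt (a + b) = wt a + wt b := by
    intro a b; simp [wt, add_mul, Finset.sum_add_distrib]
  have wt_mono : ∀ a b, a ≤ b → wt a ≤ wt b := by
    intro a b hab
    exact Finset.sum_le_sum fun i _ => mul_le_mul_of_nonneg_right (Nat.cast_le.2 (hab i)) (hw i)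
  let κ : (Fin p → ℕ) → ℝ ×ₗ Lex (Fin p → ℕ) := fun a => toLex (wt a, toLex a)
  have κ_add : ∀ a b, κ (a + b) = κ a + κ b := by
    intro a b
    simp only [κ, wt_add]
    rfl
  have κ_mono : ∀ a b, a ≤ b → κ a ≤ κ b := by
    intro a b hab
    exact Prod.Lex.toLex_mono (Prod.mk_le_mk.2 ⟨wt_mono a b hab, Pi.toLex_monotone hab⟩)
  have κ_inj : ∀ a b, κ a = κ b → a = b := by
    intro a b h
    have := congrArg (fun z => ofLex (ofLex z).2) h
    exact this
  have κ_wt : ∀ a b, κ a ≤ κ b → wt a ≤ wt b := by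
    intro a b h
    rcases Prod.Lex.toLex_le_toLex.1 h with h | h
    · exact h.le
    · exact h.1.le
  obtain ⟨a₀, ha₀, hamin⟩ := Finset.exists_min_image A κ ⟨a, ha⟩
  obtain ⟨b₀, hb₀, hbmin⟩ := Finset.exists_min_image B κ ⟨b, hb⟩
  suffices h : ∃ c ∈ C, c ≤ a₀ + b₀ by
    obtain ⟨c, hc, hle⟩ := h
    refine ⟨c, hc, (wt_mono _ _ hle).trans ?_⟩
    change wt _ ≤ wt _
    rw [wt_add, wt_add]
    exact add_le_add (κ_wt _ _ (hamin a ha)) (κ_wt _ _ (hbmin b hb))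
  by_contra hcon
  push Not at hcon
  obtain ⟨⟨h₁, r, hh₁, hr, e₁⟩, -⟩ := hA
  obtain ⟨⟨h₂, s, hh₂, hs, e₂⟩, -⟩ := hB
  obtain ⟨⟨h₃, t, hh₃, ht, e₃⟩, -⟩ := hC
  let D := (A ×ˢ B).erase (a₀, b₀)
  have hk : h₃ * (r a₀ * s b₀) ∈ Ideal.span (Set.range x) := by
    refine key hx _ (a₀ + b₀) ((C : Set (Fin p → ℕ)) ∪ (fun q : (Fin p → ℕ) × (Fin p → ℕ) => q.1 + q.2) '' D) ?_ ?_
    · have e4 := Finset.add_sum_erase (A ×ˢ B)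
        (fun q => (r q.1 * mono x q.1) * (s q.2 * mono x q.2))
        (Finset.mem_product.2 ⟨ha₀, hb₀⟩ : (a₀, b₀) ∈ A ×ˢ B)
      rw [Finset.sum_product] at e4
      simp only at e4
      rw [← Finset.sum_mul_sum, ← e₁, ← e₂] at e4
      have e5 : h₃ * (r a₀ * s b₀) * mono x (a₀ + b₀) = h₁ * h₂ * (h₃ * (f * g)) -
          h₃ * ∑ q ∈ D, (r q.1 * mono x q.1) * (s q.2 * mono x q.2) := by
        rw [mono_add]
        linear_combination h₃ * e4
      rw [e5]
      refine Ideal.sub_mem _ (Ideal.mul_mem_left _ _ ?_) (Ideal.mul_mem_left _ _ ?_)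
      · rw [e₃]
        exact sum_mem_span x _ _ _ fun b hb => Or.inl hb
      · refine Ideal.sum_mem _ fun q hq => ?_
        have e6 : (r q.1 * mono x q.1) * (s q.2 * mono x q.2) = r q.1 * s q.2 * mono x (q.1 + q.2) := by
          rw [mono_add]; ring
        rw [e6]
        exact Ideal.mul_mem_left _ _ (Ideal.subset_span ⟨_, Or.inr ⟨q, hq, rfl⟩, rfl⟩)
    · rintro c (hc | hc) hle
      · exact hcon c hc hle
      · obtain ⟨⟨a', b'⟩, hq, rfl⟩ := hc
        have hq' := Finset.mem_erase.1 (Finset.mem_coe.1 hq)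
        obtain ⟨hne, hq'⟩ := hq'
        obtain ⟨ha', hb'⟩ := Finset.mem_product.1 hq'
        have h1 := κ_mono _ _ hle
        simp only [κ_add] at h1
        have h2 := hamin a' ha'
        have h3 := hbmin b' hb'
        have h4 : κ a' = κ a₀ := by
          refine le_antisymm ?_ h2
          by_contra hlt
          exact absurd h1 (not_le.2 (add_lt_add_of_lt_of_le (not_le.1 hlt) h3))
        have h5 : κ b' = κ b₀ := by
          refine le_antisymm ?_ h3
          by_contra hlt
          exact absurd h1 (not_le.2 (add_lt_add_of_le_of_lt h2 (not_le.1 hlt)))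
        exact hne (Prod.ext (κ_inj _ _ h4) (κ_inj _ _ h5))
  rcases hP.mem_or_mem hk with h | h
  · exact hh₃ h
  · rcases hP.mem_or_mem h with h | h
    · exact hr _ ha₀ h
    · exact hs _ hb₀ h

lemma toR_add (a b : Fin p → ℕ) : toR (a + b) = toR a + toR b := by
  ext i; simp [toR]

lemma orthant_subset : Set.Ici (0 : Fin p → ℝ) ⊆ convexHull ℝ (Set.range (toR (p := p))) := by
  have e : Set.range (toR (p := p)) = Set.pi Set.univ (fun _ => Set.range (Nat.cast : ℕ → ℝ)) := by
    ext v
    simp only [Set.mem_range, Set.mem_pi, Set.mem_univ, forall_true_left]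
    constructor
    · rintro ⟨a, rfl⟩ i
      exact ⟨a i, rfl⟩
    · intro h
      choose a ha using h
      exact ⟨a, funext ha⟩
  rw [e, convexHull_pi]
  intro v hv i _
  have h0 : (0 : ℝ) ∈ Set.range (Nat.cast : ℕ → ℝ) := ⟨0, by simp⟩
  have h1 : ((⌈v i⌉₊ : ℕ) : ℝ) ∈ Set.range (Nat.cast : ℕ → ℝ) := ⟨_, rfl⟩
  refine segment_subset_convexHull h0 h1 ?_
  rw [segment_eq_Icc (Nat.cast_nonneg _)]
  exact ⟨hv i, Nat.le_ceil _⟩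

lemma add_mem_hull (hR : IsRegularDomain R) {x : Fin p → R} (hx : IsGRSOP x) {I J : Ideal R}
    {a b : Fin p → ℕ} (ha : a ∈ SI x I) (hb : b ∈ SI x J) :
    toR (a + b) ∈ convexHull ℝ (toR '' SI x (I * J)) := by
  classical
  obtain ⟨f, hf, haf⟩ := mem_SI.1 ha
  obtain ⟨g, hg, hbg⟩ := mem_SI.1 hb
  obtain ⟨A, hA⟩ := exists_min hR hx f
  obtain ⟨B, hB⟩ := exists_min hR hx g
  obtain ⟨C, hC⟩ := exists_min hR hx (f * g)
  rw [supp_eq hx hA] at haf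
  rw [supp_eq hx hB] at hbg
  have hface := face hR hx f g hA hB hC haf hbg
  have hCS : ∀ c ∈ C, c ∈ SI x (I * J) := fun c hc =>
    mem_SI.2 ⟨f * g, Ideal.mul_mem_mul hf hg, by rw [supp_eq hx hC]; exact hc⟩
  let K : Set (Fin p → ℝ) := convexHull ℝ (toR '' (C : Set (Fin p → ℕ))) + Set.Ici 0
  have hKS : K ⊆ convexHull ℝ (toR '' SI x (I * J)) := by
    refine (Set.add_subset_add_left orthant_subset).trans ?_
    rw [← convexHull_add]
    refine convexHull_mono ?_
    rintro _ ⟨_, ⟨c, hc, rfl⟩, _, ⟨d, rfl⟩, rfl⟩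
    exact ⟨c + d, SI_up hR hx (hCS c hc) le_self_add, toR_add c d⟩
  have hKconv : Convex ℝ K := (convex_convexHull ℝ _).add (convex_Ici 0)
  have hKclosed : IsClosed K :=
    isClosed_Ici.add_left_of_isCompact ((C.finite_toSet.image _).isCompact_convexHull ℝ)
  apply hKS
  by_contra hz
  obtain ⟨w, u, hwz, hwK⟩ := geometric_hahn_banach_point_closed hKconv hKclosed hz
  obtain ⟨c₀, hc₀, -⟩ := hface 0 (by simp)
  have hCK : ∀ c ∈ C, ∀ v : Fin p → ℝ, 0 ≤ v → toR c + v ∈ K := fun c hc v hv =>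
    Set.add_mem_add (subset_convexHull ℝ _ ⟨c, hc, rfl⟩) hv
  have hw : ∀ i, 0 ≤ w (Pi.single i 1) := by
    intro i
    by_contra hneg
    push Not at hneg
    have h0 := hwK _ (hCK c₀ hc₀ 0 le_rfl)
    rw [add_zero] at h0
    set t := (w (toR c₀) - u) / (- w (Pi.single i 1)) with ht
    have htpos : 0 ≤ t := div_nonneg (by linarith) (by linarith)
    have h1 := hwK _ (hCK c₀ hc₀ (t • Pi.single i 1) (smul_nonneg htpos (by simp)))
    rw [map_add, map_smul, smul_eq_mul] at h1
    have h2 : t * w (Pi.single i 1) = - (w (toR c₀) - u) := by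
      have hne : w (Pi.single i 1) ≠ 0 := hneg.ne
      rw [ht, div_neg, neg_mul, div_mul_cancel₀ _ hne]
    linarith
  obtain ⟨c, hc, hle⟩ := hface (fun i => w (Pi.single i 1)) hw
  have hexp : ∀ d : Fin p → ℕ, w (toR d) = ∑ i, (d i : ℝ) * w (Pi.single i 1) := by
    intro d
    have := LinearMap.pi_apply_eq_sum_univ (w : (Fin p → ℝ) →ₗ[ℝ] ℝ) (toR d)
    simp only [ContinuousLinearMap.coe_coe, smul_eq_mul] at this
    rw [this]
    refine Finset.sum_congr rfl fun i _ => ?_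
    congr 2
    ext j
    simp [Pi.single_apply, eq_comm]
  have h1 := hwK _ (hCK c hc 0 le_rfl)
  rw [add_zero, hexp] at h1
  rw [hexp] at hwz
  linarith

lemma ΓI_mul (hR : IsRegularDomain R) {x : Fin p → R} (hx : IsGRSOP x) (I J : Ideal R) :
    ΓI x (I * J) = ΓI x I + ΓI x J := by
  change convexHull ℝ (toR '' SI x (I * J)) =
    convexHull ℝ (toR '' SI x I) + convexHull ℝ (toR '' SI x J)
  rw [← convexHull_add]
  apply Set.Subset.antisymm
  · refine convexHull_mono ?_
    rintro _ ⟨a, ha, rfl⟩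
    obtain ⟨u, hu, v, hv, rfl⟩ := SI_mul_subset hR hx I J ha
    exact ⟨_, ⟨u, hu, rfl⟩, _, ⟨v, hv, rfl⟩, (toR_add u v).symm⟩
  · refine convexHull_min ?_ (convex_convexHull ℝ _)
    rintro _ ⟨_, ⟨a, ha, rfl⟩, _, ⟨b, hb, rfl⟩, rfl⟩
    have := add_mem_hull hR hx ha hb
    rwa [toR_add] at this

/-- `Γ_x(Iⁿ) = n·Γ_x(I)`. -/
theorem newtonPolyhedron_pow {R : Type*} [CommRing R] {p : ℕ}
    (x : Fin p → R) (hR : IsRegularDomain R) (hx : IsGRSOP x) (I : Ideal R)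
    (n : ℕ) (hn : 0 < n) :
    ΓI x (I ^ n) = (n : ℝ) • ΓI x I := by
  induction n, hn using Nat.le_induction with
  | base => simp
  | succ n hn ih =>
    rw [pow_succ, ΓI_mul hR hx, ih]
    have hc : Convex ℝ (ΓI x I) := convex_convexHull ℝ _
    push_cast
    rw [hc.add_smul (Nat.cast_nonneg n) zero_le_one, one_smul]

end NND
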